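/- Let (g_Σ)_{Σ ∈ SPD(n)} be the O(n)-invariant family of inner products on Sym(n) determined by functions γ, α : (0,∞)ⁿ → (0,∞) and β : (0,∞)ⁿ → ℝ satisfying the compatibility, positivity and symmetry conditions, via g_D(X,X) = Σ_i γ(d_i, d_{k≠i}) X_{ii}² + Σ_{i≠j} α(d_i, d_j, d_{k≠i,j}) X_{ij}² + Σ_{i≠j} β(d_i, d_j, d_{k≠i,j}) X_{ii} X_{jj} at positive diagonal D and g_Σ(X,X) = g_D(PᵀXP, PᵀXP) for Σ = PDPᵀ. Then g is invariant under inversion — meaning the inversion map Σ ↦ Σ⁻¹ is an isometry, i.e. g_{Σ⁻¹}(Σ⁻¹XΣ⁻¹, Σ⁻¹XΣ⁻¹) = g_Σ(X,X) for all Σ ∈ SPD(n) and X ∈ Sym(n) — if and only if γ(d₁⁻¹,…,d_n⁻¹) = d₁⁴·γ(d₁,…,d_n) and f(d₁⁻¹,…,d_n⁻¹) = d₁²d₂²·f(d₁,…,d_n) for each f ∈ {α, β} and all d ∈ (0,∞)ⁿ. -/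

import Mathlib

open Matrix Finset

/-- A vector in `ℝⁿ` is positive if all its entries are. -/
def PosVec {n : ℕ} (d : Fin n → ℝ) : Prop := ∀ i, 0 < d i

/-- The vector `(d_i, d_{k≠i})`: entries of `d` reordered so that `d i` comes first, the
remaining entries being the `d k` for `k ≠ i` (in some order). -/
def reord1 {n : ℕ} (hn : 2 ≤ n) (d : Fin n → ℝ) (i : Fin n) : Fin n → ℝ :=
  d ∘ (Equiv.swap (⟨0, by omega⟩ : Fin n) i)

/-- A permutation sending `0 ↦ i` and `1 ↦ j` (for `i ≠ j`). -/
def perm2 {n : ℕ} (hn : 2 ≤ n) (i j : Fin n) : Equiv.Perm (Fin n) :=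
  Equiv.swap (⟨0, by omega⟩ : Fin n) i *
    Equiv.swap (⟨1, by omega⟩ : Fin n) (Equiv.swap (⟨0, by omega⟩ : Fin n) i j)

/-- The vector `(d_i, d_j, d_{k≠i,j})`: entries of `d` reordered so that `d i, d j` come first,
the remaining entries being the `d k` for `k ≠ i,j` (in some order). -/
def reord2 {n : ℕ} (hn : 2 ≤ n) (d : Fin n → ℝ) (i j : Fin n) : Fin n → ℝ :=
  d ∘ (perm2 hn i j)

/-- `f` is `(1,n−1)`-symmetric: invariant under all permutations of its last `n−1` variables. -/
def Sym1n {n : ℕ} (hn : 2 ≤ n) (f : (Fin n → ℝ) → ℝ) : Prop :=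
  ∀ σ : Equiv.Perm (Fin n), σ ⟨0, by omega⟩ = (⟨0, by omega⟩ : Fin n) →
    ∀ d : Fin n → ℝ, PosVec d → f (d ∘ σ) = f d

/-- `f` is `(2,n−2)`-symmetric: invariant under all permutations of its first `2` variables and
of its last `n−2` variables. -/
def Sym2n {n : ℕ} (hn : 2 ≤ n) (f : (Fin n → ℝ) → ℝ) : Prop :=
  ∀ σ : Equiv.Perm (Fin n),
    ((σ ⟨0, by omega⟩ = (⟨0, by omega⟩ : Fin n) ∧ σ ⟨1, by omega⟩ = (⟨1, by omega⟩ : Fin n)) ∨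
     (σ ⟨0, by omega⟩ = (⟨1, by omega⟩ : Fin n) ∧ σ ⟨1, by omega⟩ = (⟨0, by omega⟩ : Fin n))) →
    ∀ d : Fin n → ℝ, PosVec d → f (d ∘ σ) = f d

/-- The symmetric matrix `S(d)` with `S_{ii}(d) = γ(d_i, d_{k≠i})` and
`S_{ij}(d) = β(d_i, d_j, d_{k≠i,j})` for `i ≠ j`. -/
def Smat {n : ℕ} (hn : 2 ≤ n) (γ β : (Fin n → ℝ) → ℝ) (d : Fin n → ℝ) :
    Matrix (Fin n) (Fin n) ℝ :=
  Matrix.of fun i j => if i = j then γ (reord1 hn d i) else β (reord2 hn d i j)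

/-- The compatibility condition: `γ = α + β` on `{d : d₁ = d₂}`. -/
def CompatCond {n : ℕ} (hn : 2 ≤ n) (γ α β : (Fin n → ℝ) → ℝ) : Prop :=
  ∀ d : Fin n → ℝ, PosVec d → d ⟨0, by omega⟩ = d ⟨1, by omega⟩ → γ d = α d + β d

/-- The positivity condition: `S(d)` is positive definite for every positive `d`. -/
def PositivityCond {n : ℕ} (hn : 2 ≤ n) (γ β : (Fin n → ℝ) → ℝ) : Prop :=
  ∀ d : Fin n → ℝ, PosVec d → (Smat hn γ β d).PosDef

/-- The bilinear form
`g_D(X,Y) = Σ_i γ(d_i,d_{k≠i}) X_{ii}Y_{ii} + Σ_{i≠j} α(d_i,d_j,d_{k≠i,j}) X_{ij}Y_{ij}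
 + Σ_{i≠j} β(d_i,d_j,d_{k≠i,j}) X_{ii}Y_{jj}` at the positive diagonal matrix `D = diag d`. -/
def gD {n : ℕ} (hn : 2 ≤ n) (γ α β : (Fin n → ℝ) → ℝ) (d : Fin n → ℝ)
    (X Y : Matrix (Fin n) (Fin n) ℝ) : ℝ :=
  (∑ i, γ (reord1 hn d i) * X i i * Y i i) +
  (∑ i, ∑ j, if i = j then 0 else α (reord2 hn d i j) * X i j * Y i j) +
  (∑ i, ∑ j, if i = j then 0 else β (reord2 hn d i j) * X i i * Y j j)

/-- Frobenius norm of a real matrix. -/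
noncomputable def frobNorm {n : ℕ} (A : Matrix (Fin n) (Fin n) ℝ) : ℝ :=
  Real.sqrt (∑ i, ∑ j, (A i j) ^ 2)

/-!
Pulling `gD` back along inversion at a diagonal matrix produces another form of the same shape: it
is `gD` with `γ(d)` replaced by `d₁⁻⁴ γ(d⁻¹)` and `f(d)` by `d₁⁻² d₂⁻² f(d⁻¹)` for `f ∈ {α, β}`.
A form of this shape determines its coefficients, since its restriction to diagonal matrices is the
quadratic form of the symmetric matrix `S(d)` and its value at `E_{ij} + E_{ji}` is twice an `α`.
Hence invariance, which by the spectral theorem may be tested at diagonal matrices, says that both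
coefficient systems agree.
-/

section MatrixLemmas

variable {ι κ R : Type*} [Fintype ι]

theorem isSymm_transpose_mul_mul [NonUnitalCommSemiring R] {X : Matrix ι ι R} (hX : X.IsSymm)
    (A : Matrix ι κ R) : (Aᵀ * X * A).IsSymm := by
  simp only [Matrix.IsSymm, transpose_mul, transpose_transpose, hX.eq, Matrix.mul_assoc]

theorem isSymm_mul_mul_self [NonUnitalCommSemiring R] {A X : Matrix ι ι R} (hA : A.IsSymm)
    (hX : X.IsSymm) : (A * X * A).IsSymm := by
  simpa only [hA.eq] using isSymm_transpose_mul_mul hX A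

theorem eq_of_isSymm_of_dotProduct_mulVec_self_eq [CommRing R] [IsDomain R] [NeZero (2 : R)]
    {A B : Matrix ι ι R} (hA : A.IsSymm) (hB : B.IsSymm)
    (h : ∀ v, v ⬝ᵥ A *ᵥ v = v ⬝ᵥ B *ᵥ v) : A = B := by
  classical
  ext i j
  have hi := h (Pi.single i 1)
  have hj := h (Pi.single j 1)
  have hij := h (Pi.single i 1 + Pi.single j 1)
  simp only [mulVec_add, add_dotProduct, dotProduct_add, mulVec_single_one, single_one_dotProduct,
    col_apply, hA.apply i j, hB.apply i j] at hi hj hij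
  apply mul_left_cancel₀ (two_ne_zero' R)
  linear_combination hij - hi - hj

variable [DecidableEq ι]

theorem inv_mul_diagonal_mul_transpose [Field R] {P : Matrix ι ι R} (hP : P * Pᵀ = 1) {d : ι → R}
    (hd : ∀ i, d i ≠ 0) : (P * diagonal d * Pᵀ)⁻¹ = P * diagonal d⁻¹ * Pᵀ := by
  have hP' : Pᵀ * P = 1 := mul_eq_one_comm.mp hP
  have hdiag : diagonal d * diagonal d⁻¹ = 1 := by
    simp [diagonal_mul_diagonal, mul_inv_cancel₀ (hd _)]
  apply inv_eq_right_inv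
  calc P * diagonal d * Pᵀ * (P * diagonal d⁻¹ * Pᵀ)
      = P * (diagonal d * (Pᵀ * P) * diagonal d⁻¹) * Pᵀ := by simp only [Matrix.mul_assoc]
    _ = 1 := by rw [hP', Matrix.mul_one, hdiag, Matrix.mul_one, hP]

theorem transpose_mul_conj_mul [CommSemiring R] {P : Matrix ι ι R} (hP : P * Pᵀ = 1)
    (D X : Matrix ι ι R) :
    Pᵀ * (P * D * Pᵀ * X * (P * D * Pᵀ)) * P = D * (Pᵀ * X * P) * D := by
  have hP' : Pᵀ * P = 1 := mul_eq_one_comm.mp hP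
  calc Pᵀ * (P * D * Pᵀ * X * (P * D * Pᵀ)) * P
      = (Pᵀ * P) * D * (Pᵀ * X * P) * D * (Pᵀ * P) := by simp only [Matrix.mul_assoc]
    _ = D * (Pᵀ * X * P) * D := by rw [hP', Matrix.one_mul, Matrix.mul_one]

theorem exists_orthogonal_diagonalization_of_posDef {S : Matrix ι ι ℝ} (hS : S.PosDef) :
    ∃ (P : Matrix ι ι ℝ) (d : ι → ℝ),
      P * Pᵀ = 1 ∧ (∀ i, 0 < d i) ∧ S = P * diagonal d * Pᵀ := by
  refine ⟨hS.1.eigenvectorUnitary, hS.1.eigenvalues,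
    (mem_orthogonalGroup_iff ι ℝ).mp hS.1.eigenvectorUnitary.2, hS.eigenvalues_pos, ?_⟩
  have hspec := hS.1.spectral_theorem
  rwa [Unitary.conjStarAlgAut_apply, star_eq_conjTranspose,
    conjTranspose_eq_transpose_of_trivial] at hspec

end MatrixLemmas

section Reordering

variable {n : ℕ}

theorem PosVec.inv {d : Fin n → ℝ} (hd : PosVec d) : PosVec d⁻¹ :=
  fun i => inv_pos.mpr (hd i)

theorem PosVec.comp {d : Fin n → ℝ} (hd : PosVec d) (σ : Fin n → Fin n) : PosVec (d ∘ σ) :=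
  fun i => hd (σ i)

variable (hn : 2 ≤ n) (d : Fin n → ℝ)

theorem perm2_apply_zero {i j : Fin n} (hij : i ≠ j) : perm2 hn i j ⟨0, by omega⟩ = i := by
  have hj : (⟨0, by omega⟩ : Fin n) ≠ Equiv.swap ⟨0, by omega⟩ i j := by
    rw [ne_eq, eq_comm, Equiv.swap_apply_eq_iff, Equiv.swap_apply_left]
    exact hij.symm
  rw [perm2, Equiv.Perm.mul_apply, Equiv.swap_apply_of_ne_of_ne (by simp) hj,
    Equiv.swap_apply_left]

theorem perm2_apply_one (i j : Fin n) : perm2 hn i j ⟨1, by omega⟩ = j := by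
  simp [perm2]

theorem perm2_zero_one : perm2 hn ⟨0, by omega⟩ ⟨1, by omega⟩ = 1 := by
  simp [perm2, ← Equiv.Perm.one_def]

theorem reord1_apply_zero (i : Fin n) : reord1 hn d i ⟨0, by omega⟩ = d i := by
  simp [reord1]

theorem reord1_zero : reord1 hn d ⟨0, by omega⟩ = d := by
  simp [reord1]

theorem reord2_apply_zero {i j : Fin n} (hij : i ≠ j) : reord2 hn d i j ⟨0, by omega⟩ = d i :=
  congrArg d (perm2_apply_zero hn hij)

theorem reord2_apply_one (i j : Fin n) : reord2 hn d i j ⟨1, by omega⟩ = d j :=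
  congrArg d (perm2_apply_one hn i j)

theorem reord2_zero_one : reord2 hn d ⟨0, by omega⟩ ⟨1, by omega⟩ = d := by
  rw [reord2, perm2_zero_one, Equiv.Perm.coe_one, Function.comp_id]

variable {hn d}

theorem Sym2n.reord2_comm {f : (Fin n → ℝ) → ℝ} (hf : Sym2n hn f) (hd : PosVec d) {i j : Fin n}
    (hij : i ≠ j) : f (reord2 hn d j i) = f (reord2 hn d i j) := by
  have hσ : reord2 hn d j i = reord2 hn d i j ∘ ((perm2 hn i j)⁻¹ * perm2 hn j i) := by
    ext k
    simp [reord2]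
  rw [hσ]
  refine hf _ (Or.inr ⟨?_, ?_⟩) _ (hd.comp _)
  · rw [Equiv.Perm.mul_apply, Equiv.Perm.inv_eq_iff_eq, perm2_apply_zero hn hij.symm,
      perm2_apply_one]
  · rw [Equiv.Perm.mul_apply, Equiv.Perm.inv_eq_iff_eq, perm2_apply_zero hn hij, perm2_apply_one]

end Reordering

section Coefficients

variable {n : ℕ} {hn : 2 ≤ n} {d : Fin n → ℝ} {γ α β γ' α' β' : (Fin n → ℝ) → ℝ}

theorem Smat_apply_self (i : Fin n) : Smat hn γ β d i i = γ (reord1 hn d i) :=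
  if_pos rfl

theorem Smat_apply_of_ne {i j : Fin n} (hij : i ≠ j) : Smat hn γ β d i j = β (reord2 hn d i j) :=
  if_neg hij

theorem Smat_isSymm (hβ : Sym2n hn β) (hd : PosVec d) : (Smat hn γ β d).IsSymm := by
  refine Matrix.IsSymm.ext fun i j => ?_
  rcases eq_or_ne i j with rfl | hij
  · rfl
  · rw [Smat_apply_of_ne hij, Smat_apply_of_ne hij.symm, hβ.reord2_comm hd hij]

theorem gD_diagonal (v w : Fin n → ℝ) :
    gD hn γ α β d (diagonal v) (diagonal w) = v ⬝ᵥ Smat hn γ β d *ᵥ w := by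
  have hα : ∀ i j, (if i = j then 0 else
      α (reord2 hn d i j) * diagonal v i j * diagonal w i j) = 0 := by
    intro i j
    split_ifs with hij <;> simp [hij]
  have hS : ∀ i j, v i * (Smat hn γ β d i j * w j) =
      (if i = j then γ (reord1 hn d i) * v i * w i else 0) +
        if i = j then 0 else β (reord2 hn d i j) * v i * w j := by
    intro i j
    rcases eq_or_ne i j with rfl | hij
    · rw [Smat_apply_self, if_pos rfl, if_pos rfl]
      ring
    · rw [Smat_apply_of_ne hij, if_neg hij, if_neg hij]
      ring
  simp only [gD, hα, dotProduct, mulVec, mul_sum, hS, sum_add_distrib, diagonal_apply_eq,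
    sum_const_zero, add_zero, sum_ite_eq, mem_univ, if_true]

theorem gD_single_add_single {i j : Fin n} (hij : i ≠ j) :
    gD hn γ α β d (single i j 1 + single j i 1) (single i j 1 + single j i 1) =
      α (reord2 hn d i j) + α (reord2 hn d j i) := by
  set X : Matrix (Fin n) (Fin n) ℝ := single i j 1 + single j i 1 with hX
  have hdiag : ∀ k, X k k = 0 := by
    intro k
    simp only [hX, Matrix.add_apply, single_apply]
    grind
  have hoff : ∀ k l, (if k = l then 0 else α (reord2 hn d k l) * X k l * X k l) =
      single i j (α (reord2 hn d i j)) k l + single j i (α (reord2 hn d j i)) k l := by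
    intro k l
    simp only [hX, Matrix.add_apply, single_apply]
    grind
  have hsum : ∀ (k l : Fin n) (a : ℝ), ∑ p, ∑ q, single k l a p q = a := by
    intro k l a
    simp [single_apply, ite_and]
  simp only [gD, hdiag, hoff, sum_add_distrib, hsum, mul_zero, ite_self, sum_const_zero, zero_add,
    add_zero]

theorem coeff_eq_of_gD_eq (hα : Sym2n hn α) (hβ : Sym2n hn β) (hα' : Sym2n hn α')
    (hβ' : Sym2n hn β') (hd : PosVec d)
    (h : ∀ X : Matrix (Fin n) (Fin n) ℝ, X.IsSymm →
      gD hn γ α β d X X = gD hn γ' α' β' d X X) :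
    γ d = γ' d ∧ α d = α' d ∧ β d = β' d := by
  have h01 : (⟨0, by omega⟩ : Fin n) ≠ ⟨1, by omega⟩ := by simp
  have hS : Smat hn γ β d = Smat hn γ' β' d :=
    eq_of_isSymm_of_dotProduct_mulVec_self_eq (Smat_isSymm hβ hd) (Smat_isSymm hβ' hd) fun v => by
      simpa only [gD_diagonal] using h (diagonal v) (isSymm_diagonal v)
  refine ⟨?_, ?_, ?_⟩
  · simpa only [Smat_apply_self, reord1_zero] using
      congrFun₂ hS (⟨0, by omega⟩ : Fin n) (⟨0, by omega⟩ : Fin n)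
  · have hX := h _ (isSymm_add_transpose_self
      (single (⟨0, by omega⟩ : Fin n) (⟨1, by omega⟩ : Fin n) 1))
    rw [transpose_single, gD_single_add_single h01, gD_single_add_single h01,
      hα.reord2_comm hd h01, hα'.reord2_comm hd h01, reord2_zero_one] at hX
    linarith
  · simpa only [Smat_apply_of_ne h01, reord2_zero_one] using
      congrFun₂ hS (⟨0, by omega⟩ : Fin n) (⟨1, by omega⟩ : Fin n)

theorem gD_congr (hd : PosVec d)
    (h : ∀ d, PosVec d → γ d = γ' d ∧ α d = α' d ∧ β d = β' d) (X Y : Matrix (Fin n) (Fin n) ℝ) :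
    gD hn γ α β d X Y = gD hn γ' α' β' d X Y := by
  have h1 (i) : γ (reord1 hn d i) = γ' (reord1 hn d i) := (h _ (hd.comp _)).1
  have h2 (i j) : α (reord2 hn d i j) = α' (reord2 hn d i j) ∧
      β (reord2 hn d i j) = β' (reord2 hn d i j) := (h _ (hd.comp _)).2
  simp only [gD, h1, h2]

theorem forall_gD_eq_iff (hα : Sym2n hn α) (hβ : Sym2n hn β) (hα' : Sym2n hn α')
    (hβ' : Sym2n hn β') :
    (∀ d, PosVec d → ∀ X : Matrix (Fin n) (Fin n) ℝ, X.IsSymm →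
      gD hn γ α β d X X = gD hn γ' α' β' d X X) ↔
    ∀ d, PosVec d → γ d = γ' d ∧ α d = α' d ∧ β d = β' d :=
  ⟨fun h d hd => coeff_eq_of_gD_eq hα hβ hα' hβ' hd (h d hd),
    fun h _ hd X _ => gD_congr hd h X X⟩

end Coefficients

section Inversion

variable {n : ℕ} (hn : 2 ≤ n)

/-- The coefficient `d₁⁻⁴ f(d⁻¹)` of the squared diagonal entries in the pullback of `gD` along
inversion, where `f` is that coefficient in `gD`. -/
noncomputable def invPullback1 (f : (Fin n → ℝ) → ℝ) (d : Fin n → ℝ) : ℝ :=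
  (d ⟨0, by omega⟩)⁻¹ ^ 4 * f d⁻¹

/-- The coefficient `d₁⁻² d₂⁻² f(d⁻¹)` in the pullback of `gD` along inversion, where `f` is one of
the coefficients `α`, `β` of `gD`. -/
noncomputable def invPullback2 (f : (Fin n → ℝ) → ℝ) (d : Fin n → ℝ) : ℝ :=
  (d ⟨0, by omega⟩)⁻¹ ^ 2 * (d ⟨1, by omega⟩)⁻¹ ^ 2 * f d⁻¹

variable {hn} {γ α β f : (Fin n → ℝ) → ℝ} {d : Fin n → ℝ}

theorem invPullback1_eq_iff (hd : PosVec d) :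
    invPullback1 hn f d = f d ↔ f d⁻¹ = d ⟨0, by omega⟩ ^ 4 * f d := by
  rw [invPullback1, inv_pow, inv_mul_eq_iff_eq_mul₀ (pow_ne_zero _ (hd _).ne')]

theorem invPullback2_eq_iff (hd : PosVec d) :
    invPullback2 hn f d = f d ↔ f d⁻¹ = d ⟨0, by omega⟩ ^ 2 * d ⟨1, by omega⟩ ^ 2 * f d := by
  rw [invPullback2, inv_pow, inv_pow, ← mul_inv, inv_mul_eq_iff_eq_mul₀
    (mul_ne_zero (pow_ne_zero _ (hd _).ne') (pow_ne_zero _ (hd _).ne'))]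

theorem Sym2n.invPullback2 (hf : Sym2n hn f) : Sym2n hn (invPullback2 hn f) := by
  intro σ hσ d hd
  have hfσ : f (d ∘ σ)⁻¹ = f d⁻¹ := hf σ hσ d⁻¹ hd.inv
  rcases hσ with ⟨h0, h1⟩ | ⟨h0, h1⟩ <;>
    simp only [_root_.invPullback2, hfσ, Function.comp_apply, h0, h1]
  ring

theorem invPullback1_reord1 (i : Fin n) :
    invPullback1 hn f (reord1 hn d i) = (d i)⁻¹ ^ 4 * f (reord1 hn d⁻¹ i) := by
  rw [invPullback1, reord1_apply_zero]
  rfl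

theorem invPullback2_reord2 {i j : Fin n} (hij : i ≠ j) :
    invPullback2 hn f (reord2 hn d i j) =
      (d i)⁻¹ ^ 2 * (d j)⁻¹ ^ 2 * f (reord2 hn d⁻¹ i j) := by
  rw [invPullback2, reord2_apply_zero hn d hij, reord2_apply_one]
  rfl

theorem gD_inv_diagonal_conj (X Y : Matrix (Fin n) (Fin n) ℝ) :
    gD hn γ α β d⁻¹ (diagonal d⁻¹ * X * diagonal d⁻¹) (diagonal d⁻¹ * Y * diagonal d⁻¹) =
      gD hn (invPullback1 hn γ) (invPullback2 hn α) (invPullback2 hn β) d X Y := by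
  simp only [gD, mul_diagonal, diagonal_mul, Pi.inv_apply]
  congr 1
  · congr 1
    · refine sum_congr rfl fun i _ => ?_
      rw [invPullback1_reord1]
      ring
    · refine sum_congr rfl fun i _ => sum_congr rfl fun j _ => ite_congr rfl (fun _ => rfl) ?_
      intro hij
      rw [invPullback2_reord2 hij]
      ring
  · refine sum_congr rfl fun i _ => sum_congr rfl fun j _ => ite_congr rfl (fun _ => rfl) ?_
    intro hij
    rw [invPullback2_reord2 hij]
    ring

/-- `g` is the `O(n)`-invariant extension of the forms `gD` from diagonal matrices to all positive
definite ones; only its quadratic form `g Σ X`, standing for `g_Σ(X, X)`, is recorded. -/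
def IsInvariantExtension (hn : 2 ≤ n) (γ α β : (Fin n → ℝ) → ℝ)
    (g : Matrix (Fin n) (Fin n) ℝ → Matrix (Fin n) (Fin n) ℝ → ℝ) : Prop :=
  ∀ (P : Matrix (Fin n) (Fin n) ℝ) (d : Fin n → ℝ), P * Pᵀ = 1 → PosVec d →
    ∀ X : Matrix (Fin n) (Fin n) ℝ, X.IsSymm →
      g (P * diagonal d * Pᵀ) X = gD hn γ α β d (Pᵀ * X * P) (Pᵀ * X * P)

/-- Inversion is an isometry of the family of quadratic forms `g` on positive definite matrices. -/
def IsInversionInvariant (g : Matrix (Fin n) (Fin n) ℝ → Matrix (Fin n) (Fin n) ℝ → ℝ) : Prop :=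
  ∀ S : Matrix (Fin n) (Fin n) ℝ, S.PosDef → ∀ X : Matrix (Fin n) (Fin n) ℝ, X.IsSymm →
    g S⁻¹ (S⁻¹ * X * S⁻¹) = g S X

namespace IsInvariantExtension

variable {g : Matrix (Fin n) (Fin n) ℝ → Matrix (Fin n) (Fin n) ℝ → ℝ}

theorem apply_inv (hg : IsInvariantExtension hn γ α β g) {P : Matrix (Fin n) (Fin n) ℝ}
    (hP : P * Pᵀ = 1) (hd : PosVec d) {X : Matrix (Fin n) (Fin n) ℝ} (hX : X.IsSymm) :
    g (P * diagonal d * Pᵀ)⁻¹ ((P * diagonal d * Pᵀ)⁻¹ * X * (P * diagonal d * Pᵀ)⁻¹) =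
      gD hn (invPullback1 hn γ) (invPullback2 hn α) (invPullback2 hn β) d
        (Pᵀ * X * P) (Pᵀ * X * P) := by
  have hsymm : (P * diagonal d⁻¹ * Pᵀ).IsSymm := by
    simpa only [transpose_transpose] using isSymm_transpose_mul_mul (isSymm_diagonal d⁻¹) Pᵀ
  rw [inv_mul_diagonal_mul_transpose hP fun i => (hd i).ne',
    hg P d⁻¹ hP hd.inv _ (isSymm_mul_mul_self hsymm hX), transpose_mul_conj_mul hP,
    gD_inv_diagonal_conj]

theorem isInversionInvariant_iff_gD (hg : IsInvariantExtension hn γ α β g) :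
    IsInversionInvariant g ↔ ∀ d, PosVec d → ∀ X : Matrix (Fin n) (Fin n) ℝ, X.IsSymm →
      gD hn (invPullback1 hn γ) (invPullback2 hn α) (invPullback2 hn β) d X X =
        gD hn γ α β d X X := by
  constructor
  · intro hinv d hd X hX
    have h1 : (1 : Matrix (Fin n) (Fin n) ℝ) * 1ᵀ = 1 := by simp
    have hpos : ((1 : Matrix (Fin n) (Fin n) ℝ) * diagonal d * 1ᵀ).PosDef := by
      simpa using PosDef.diagonal hd
    have hX_inv := hinv _ hpos X hX
    rw [hg.apply_inv h1 hd hX, hg 1 d h1 hd X hX] at hX_inv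
    simpa only [transpose_one, Matrix.one_mul, Matrix.mul_one] using hX_inv
  · intro h S hS X hX
    obtain ⟨P, d, hP, hd, rfl⟩ := exists_orthogonal_diagonalization_of_posDef hS
    rw [hg.apply_inv hP hd hX, hg P d hP hd X hX]
    exact h d hd _ (isSymm_transpose_mul_mul hX P)

end IsInvariantExtension

theorem o_n_invariant_metric_inversion_invariance_general
    (hα : Sym2n hn α) (hβ : Sym2n hn β)
    {g : Matrix (Fin n) (Fin n) ℝ → Matrix (Fin n) (Fin n) ℝ → ℝ}
    (hg : IsInvariantExtension hn γ α β g) :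
    IsInversionInvariant g ↔ ∀ d, PosVec d →
      γ d⁻¹ = d ⟨0, by omega⟩ ^ 4 * γ d ∧
      α d⁻¹ = d ⟨0, by omega⟩ ^ 2 * d ⟨1, by omega⟩ ^ 2 * α d ∧
      β d⁻¹ = d ⟨0, by omega⟩ ^ 2 * d ⟨1, by omega⟩ ^ 2 * β d := by
  rw [hg.isInversionInvariant_iff_gD,
    forall_gD_eq_iff hα.invPullback2 hβ.invPullback2 hα hβ]
  refine forall₂_congr fun d hd => ?_
  rw [invPullback1_eq_iff hd, invPullback2_eq_iff hd, invPullback2_eq_iff hd]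

end Inversion

/-- the `O(n)`-invariant metric `g` determined by `γ, α, β` is invariant under
inversion (`g_{Σ⁻¹}(Σ⁻¹XΣ⁻¹, Σ⁻¹XΣ⁻¹) = g_Σ(X,X)`) iff `γ(d⁻¹) = d₁⁴ γ(d)` and
`f(d⁻¹) = d₁² d₂² f(d)` for `f ∈ {α, β}` and all positive `d`. -/
theorem o_n_invariant_metric_inversion_invariance (n : ℕ) (hn : 2 ≤ n)
    (γ α β : (Fin n → ℝ) → ℝ)
    (hγpos : ∀ d, PosVec d → 0 < γ d) (hαpos : ∀ d, PosVec d → 0 < α d)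
    (hcompat : CompatCond hn γ α β) (hposS : PositivityCond hn γ β)
    (hγsym : Sym1n hn γ) (hαsym : Sym2n hn α) (hβsym : Sym2n hn β)
    (g : Matrix (Fin n) (Fin n) ℝ → Matrix (Fin n) (Fin n) ℝ → ℝ)
    (hg : ∀ (P : Matrix (Fin n) (Fin n) ℝ) (d : Fin n → ℝ), P * Pᵀ = 1 → PosVec d →
      ∀ X : Matrix (Fin n) (Fin n) ℝ, X.IsSymm →
        g (P * Matrix.diagonal d * Pᵀ) X = gD hn γ α β d (Pᵀ * X * P) (Pᵀ * X * P)) :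
    (∀ Sig : Matrix (Fin n) (Fin n) ℝ, Sig.PosDef →
      ∀ X : Matrix (Fin n) (Fin n) ℝ, X.IsSymm →
        g Sig⁻¹ (Sig⁻¹ * X * Sig⁻¹) = g Sig X) ↔
    (∀ d : Fin n → ℝ, PosVec d →
      γ (fun i => (d i)⁻¹) = (d ⟨0, by omega⟩) ^ 4 * γ d ∧
      α (fun i => (d i)⁻¹) = (d ⟨0, by omega⟩) ^ 2 * (d ⟨1, by omega⟩) ^ 2 * α d ∧
      β (fun i => (d i)⁻¹) = (d ⟨0, by omega⟩) ^ 2 * (d ⟨1, by omega⟩) ^ 2 * β d) := by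
  exact o_n_invariant_metric_inversion_invariance_general hαsym hβsym hg
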